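/- In the simple-sunflower reduction rule for an l_r-simply characterized ranking r-CSP: if S is the center of a simple sunflower {C₁, …, C_m} with m > k in an ordered instance R_σ, then every edition F of size at most k must edit S so that S becomes consistent with σ. -/

import Mathlib

/-- A ranking `r`-CSP constraint system on vertex set `V`. -/
structure RankingCSP (V : Type*) (r : ℕ) where
  sat : Finset V → (V → ℕ) → Prop
  invariant : ∀ S : Finset V, ∀ σ τ : V → ℕ,
    (∀ u ∈ S, ∀ v ∈ S, (σ u < σ v ↔ τ u < τ v)) → (sat S σ ↔ sat S τ)

/-- `C` is a conflict: no ranking of `C` satisfies all constraints on `r`-subsets of `C`. -/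
def IsConflict {V : Type*} {r : ℕ} (c : RankingCSP V r) (C : Finset V) : Prop :=
  ¬ ∃ σ : V → ℕ, Set.InjOn σ ↑C ∧ ∀ S ⊆ C, S.card = r → c.sat S σ

/-! Every edited constraint other than the center `S` lies in at most one petal, so an edition with
fewer members than there are petals leaves some petal untouched outside `S`. There `σ` still
satisfies every constraint except possibly `S`. If it failed `S` as well, simple characterization
would make the petal a conflict of the edited system, although that system is consistent. Hence
`σ` satisfies the edited `S`, and since it did not satisfy the original one, `S` was edited. -/

theorem exists_forall_mem_le_of_pairwise_inf_le {ι α : Type*} [Fintype ι] [SemilatticeInf α]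
    {C : ι → α} {S : α} (hC : Pairwise fun i j ↦ C i ⊓ C j ≤ S)
    {F : Finset α} (hF : F.card < Fintype.card ι) :
    ∃ i, ∀ T ∈ F, T ≤ C i → T ≤ S := by
  by_contra! h
  choose T hTF hTC hTS using h
  obtain ⟨i, -, j, -, hij, hT⟩ :=
    Finset.exists_ne_map_eq_of_card_lt_of_maps_to (s := Finset.univ) hF fun i _ ↦ hTF i
  exact hTS i ((le_inf (hTC i) (hT ▸ hTC j)).trans (hC hij))

namespace RankingCSP

variable {V ι : Type*} {r l : ℕ} {c c' : RankingCSP V r} {σ : V → ℕ} {S : Finset V}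

/-- `l`-simple characterization of a single constraint system: under any ranking, an `l`-set of
vertices inducing exactly one inconsistent constraint is a conflict. A ranking `r`-CSP is
`l`-simply characterized when all its instances are. -/
def IsSimplyCharacterized (c : RankingCSP V r) (l : ℕ) : Prop :=
  ∀ σ : V → ℕ, Function.Injective σ → ∀ C : Finset V, C.card = l →
    (∃! S : Finset V, S ⊆ C ∧ S.card = r ∧ ¬ c.sat S σ) → IsConflict c C

theorem IsSimplyCharacterized.sat_of_forall_ne (hc : c.IsSimplyCharacterized l)
    (hσ : Function.Injective σ) {C : Finset V} (hCl : C.card = l) (hC : ¬ IsConflict c C)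
    (hSC : S ⊆ C) (hS : S.card = r) (hsat : ∀ T ⊆ C, T.card = r → T ≠ S → c.sat T σ) :
    c.sat S σ := by
  by_contra hSσ
  refine hC (hc σ hσ C hCl ⟨S, ⟨hSC, hS, hSσ⟩, ?_⟩)
  rintro T ⟨hTC, hT, hTσ⟩
  exact not_imp_comm.1 (hsat T hTC hT) hTσ

/-- A simple sunflower with center `S` and petals `C i`, ordered under `σ`: distinct petals meet
exactly in `S`, which is the only inconsistent constraint of each. That the petals
are also conflicts is left out: it is automatic for petals of size `l` in an `l`-simply
characterized system when `σ` is injective. -/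
structure IsSimpleSunflower [DecidableEq V] (c : RankingCSP V r) (σ : V → ℕ) (S : Finset V)
    (C : ι → Finset V) : Prop where
  card_center : S.card = r
  center_subset : ∀ i, S ⊆ C i
  pairwise_inter_eq : Pairwise fun i j ↦ C i ∩ C j = S
  not_sat_center : ¬ c.sat S σ
  eq_center_of_not_sat : ∀ i, ∀ T ⊆ C i, T.card = r → ¬ c.sat T σ → T = S

namespace IsSimpleSunflower

variable [DecidableEq V] {C : ι → Finset V}

theorem sat_of_ne_center (h : c.IsSimpleSunflower σ S C) {i : ι} {T : Finset V} (hTC : T ⊆ C i)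
    (hT : T.card = r) (hTS : T ≠ S) : c.sat T σ :=
  not_imp_comm.1 (h.eq_center_of_not_sat i T hTC hT) hTS

theorem exists_petal_forall_mem_eq_center [Fintype ι] (h : c.IsSimpleSunflower σ S C)
    {F : Finset (Finset V)} (hF : F.card < Fintype.card ι) :
    ∃ i, ∀ T ∈ F, T ⊆ C i → T.card = r → T = S := by
  obtain ⟨i, hi⟩ :=
    exists_forall_mem_le_of_pairwise_inf_le (fun _ _ hij ↦ (h.pairwise_inter_eq hij).le) hF
  refine ⟨i, fun T hTF hTC hT ↦ Finset.eq_of_subset_of_card_le (hi T hTF hTC) ?_⟩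
  exact (h.card_center.trans hT.symm).le

theorem sat_center_of_agree_off [Fintype ι] (h : c.IsSimpleSunflower σ S C)
    (hσ : Function.Injective σ) (hCl : ∀ i, (C i).card = l) {F : Finset (Finset V)}
    (hF : F.card < Fintype.card ι) (hc' : c'.IsSimplyCharacterized l)
    (hagree : ∀ T ∉ F, c'.sat T = c.sat T) (hres : ∀ i, ¬ IsConflict c' (C i)) :
    c'.sat S σ := by
  obtain ⟨i, hi⟩ := h.exists_petal_forall_mem_eq_center hF
  refine hc'.sat_of_forall_ne hσ (hCl i) (hres i) (h.center_subset i) h.card_center ?_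
  intro T hTC hT hTS
  have hTF : T ∉ F := fun hTF ↦ hTS (hi T hTF hTC hT)
  rw [hagree T hTF]
  exact h.sat_of_ne_center hTC hT hTS

end IsSimpleSunflower

end RankingCSP

theorem simple_sunflower_rule_sound_general {V ι : Type*} [DecidableEq V] [Fintype ι] {r l : ℕ}
    {c c' : RankingCSP V r} {σ : V → ℕ} (hσ : Function.Injective σ)
    {S : Finset V} {C : ι → Finset V} (hC : c.IsSimpleSunflower σ S C)
    (hCl : ∀ i, (C i).card = l) {F : Finset (Finset V)} (hF : F.card < Fintype.card ι)
    (hc' : c'.IsSimplyCharacterized l) (hagree : ∀ T ∉ F, c'.sat T = c.sat T)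
    (hres : ∀ i, ¬ IsConflict c' (C i)) :
    S ∈ F ∧ c'.sat S σ := by
  have hS : c'.sat S σ := hC.sat_center_of_agree_off hσ hCl hF hc' hagree hres
  refine ⟨by_contra fun hSF ↦ hC.not_sat_center ?_, hS⟩
  rwa [← hagree S hSF]

/-- Soundness of the simple-sunflower rule for an `l_r`-simply characterized ranking
`r`-CSP `P`: if `S` is the center of a simple sunflower `{C 1, …, C m}` with `m > k` in an
instance `c` of `P` ordered under `σ`, then any edition `F` of size at most `k`
(witnessed by the edited system `c' ∈ P` and a consistent ranking `ρ`) must edit `S` so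
that `S` becomes consistent with `σ`. -/
theorem simple_sunflower_rule_sound
    {V : Type*} [Fintype V] [DecidableEq V] {r lr k m : ℕ}
    (hr : 2 ≤ r) (hrlr : r ≤ lr)
    (P : RankingCSP V r → Prop)
    -- P is l_r-simply characterized
    (hsimple : ∀ c, P c → ∀ σ : V → ℕ, Function.Injective σ →
      ∀ C : Finset V, C.card = lr →
      (∃! S : Finset V, S ⊆ C ∧ S.card = r ∧ ¬ c.sat S σ) → IsConflict c C)
    (c : RankingCSP V r) (hc : P c)
    (σ : V → ℕ) (hσ : Function.Injective σ)
    (S : Finset V) (hS : S.card = r) (hSbad : ¬ c.sat S σ)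
    -- the simple sunflower of center S
    (C : Fin m → Finset V) (hm : k < m)
    (hcard : ∀ i, (C i).card = lr)
    (hsub : ∀ i, S ⊆ C i)
    (hpair : ∀ i j, i ≠ j → C i ∩ C j = S)
    (hconf : ∀ i, IsConflict c (C i))
    (hsimpleSun : ∀ i, ∀ T ⊆ C i, T.card = r → ¬ c.sat T σ → T = S)
    -- the edition F of size at most k
    (F : Finset (Finset V)) (hF : F.card ≤ k)
    (c' : RankingCSP V r) (hc' : P c')
    (hagree : ∀ T : Finset V, T ∉ F → c'.sat T = c.sat T)
    (ρ : V → ℕ) (hρ : Function.Injective ρ)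
    (hcons : ∀ T : Finset V, T.card = r → c'.sat T ρ) :
    S ∈ F ∧ c'.sat S σ :=
  simple_sunflower_rule_sound_general hσ ⟨hS, hsub, hpair, hSbad, hsimpleSun⟩ hcard
    (by simpa using hF.trans_lt hm) (hsimple c' hc') hagree
    fun _ h ↦ h ⟨ρ, hρ.injOn, fun T _ hT ↦ hcons T hT⟩
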